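/- For every infinite cardinal κ, the class of all simple graphs with fewer than κ vertices is indivisible. -/

import Mathlib

/-!
In the lexicographic product `A[B]`, single out one colour. Either every copy of `B` has a vertex
of that colour, and choosing one in each copy gives a monochromatic copy of `A`, or some copy of `B`
avoids the colour altogether. Hence if every `n`-colouring of `B` has a monochromatic copy of `A`,
then so does every `(n + 1)`-colouring of `A[B]`, and iterated products of `A` handle any number of
colours. An infinite cardinal is closed under products of smaller cardinals.
-/

open SimpleGraph

universe u

/-- A class of (not necessarily finite) simple graphs is indivisible. -/
def IndivisibleU (K : ∀ V : Type u, SimpleGraph V → Prop) : Prop :=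
  ∀ (V : Type u) (A : SimpleGraph V), K V A → ∀ k : ℕ, 0 < k →
    ∃ (W : Type u) (B : SimpleGraph W), K W B ∧
      ∀ c : W → Fin k, ∃ f : A ↪g B, ∀ x y, c (f x) = c (f y)

section LexProd

variable {V W : Type*}

/-- The lexicographic product `A[B]` of simple graphs, in which every vertex of `A` is replaced by
a copy of `B`. -/
def lexProd (A : SimpleGraph V) (B : SimpleGraph W) : SimpleGraph (V × W) where
  Adj := Prod.Lex A.Adj B.Adj
  symm.symm p q := by
    simp only [Prod.lex_def]
    exact Or.imp Adj.symm (And.imp Eq.symm Adj.symm)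
  loopless.irrefl p := by
    simp only [Prod.lex_def, SimpleGraph.irrefl, and_false, or_self, not_false_eq_true]

variable (A : SimpleGraph V) (B : SimpleGraph W)

theorem lexProd_adj {p q : V × W} :
    (lexProd A B).Adj p q ↔ A.Adj p.1 q.1 ∨ p.1 = q.1 ∧ B.Adj p.2 q.2 :=
  Prod.lex_def

theorem lexProd_adj_transversal (g : V → W) {v v' : V} :
    (lexProd A B).Adj (v, g v) (v', g v') ↔ A.Adj v v' := by
  rw [lexProd_adj, or_iff_left]
  rintro ⟨h : v = v', hg⟩
  exact hg.ne (congrArg g h)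

/-- The copy of `B` in `A[B]` that replaces the vertex `v` of `A`. -/
def lexProdFiber (v : V) : B ↪g lexProd A B :=
  RelEmbedding.prodLexMkLeft B.Adj (A.irrefl (v := v))

/-- The copy of `A` in `A[B]` formed by one vertex `g v` from each copy of `B`. -/
def lexProdTransversal (g : V → W) : A ↪g lexProd A B where
  toFun v := (v, g v)
  inj' _ _ := congrArg Prod.fst
  map_rel_iff' := lexProd_adj_transversal A B g

theorem exists_embedding_lexProd_mem_or_notMem (s : Set (V × W)) :
    (∃ f : A ↪g lexProd A B, ∀ v, f v ∈ s) ∨ ∃ f : B ↪g lexProd A B, ∀ w, f w ∉ s := by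
  by_cases h : ∀ v, ∃ w, (v, w) ∈ s
  · choose g hg using h
    exact .inl ⟨lexProdTransversal A B g, hg⟩
  · push Not at h
    obtain ⟨v, hv⟩ := h
    exact .inr ⟨lexProdFiber A B v, hv⟩

end LexProd

/-- The vertex partition relation `B → (A)¹_C`: every colouring of the vertices of `B` with colours
in `C` has a monochromatic induced copy of `A`. -/
def VertexArrows {V W : Type*} (B : SimpleGraph W) (A : SimpleGraph V) (C : Type*) : Prop :=
  ∀ c : W → C, ∃ f : A ↪g B, ∀ x y, c (f x) = c (f y)

namespace VertexArrows

variable {V W : Type*}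

theorem of_subsingleton (A : SimpleGraph V) (C : Type*) [Subsingleton C] :
    VertexArrows A A C :=
  fun _ => ⟨Embedding.refl, fun _ _ => Subsingleton.elim _ _⟩

theorem lexProd_succ {A : SimpleGraph V} {B : SimpleGraph W} {n : ℕ}
    (h : VertexArrows B A (Fin n)) :
    VertexArrows (lexProd A B) A (Fin (n + 1)) := by
  intro c
  obtain ⟨f, hf⟩ | ⟨f, hf⟩ := exists_embedding_lexProd_mem_or_notMem A B {p | c p = Fin.last n}
  · exact ⟨f, fun x y => (hf x).trans (hf y).symm⟩
  · choose d hd using fun w => Fin.exists_castSucc_eq.mpr (hf w)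
    obtain ⟨g, hg⟩ := h d
    refine ⟨f.comp g, fun x y => ?_⟩
    calc c (f (g x)) = (d (g x)).castSucc := (hd _).symm
      _ = (d (g y)).castSucc := congrArg Fin.castSucc (hg x y)
      _ = c (f (g y)) := hd _

end VertexArrows

theorem indivisibleU_of_lexProd {K : ∀ V : Type u, SimpleGraph V → Prop}
    (hK : ∀ {V W : Type u} (A : SimpleGraph V) (B : SimpleGraph W),
      K V A → K W B → K (V × W) (lexProd A B)) :
    IndivisibleU K := by
  intro V A hA k hk
  induction k, hk using Nat.le_induction with
  | base => exact ⟨V, A, hA, VertexArrows.of_subsingleton A (Fin 1)⟩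
  | succ n _ ih =>
    obtain ⟨W, B, hB, hBA⟩ := ih
    exact ⟨V × W, lexProd A B, hK A B hA hB, VertexArrows.lexProd_succ hBA⟩

theorem graphs_lt_kappa_indivisible (κ : Cardinal.{u}) (hκ : Cardinal.aleph0 ≤ κ) :
    IndivisibleU (fun (V : Type u) (_ : SimpleGraph V) => Cardinal.mk V < κ) := by
  refine indivisibleU_of_lexProd fun {V W} _ _ hV hW => ?_
  calc Cardinal.mk (V × W) = Cardinal.mk V * Cardinal.mk W := (Cardinal.mul_def V W).symm
    _ < κ := Cardinal.mul_lt_of_lt hκ hV hW
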